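/- For every integer e ≥ 1 and general points: ℓ(L(7e, 7e−5, 6^{2e})) = 0 (virtual dimension −10), ℓ(L(7e+1, 7e−4, 6^{2e})) = 2 (virtual dimension −4), ℓ(L(7e+2, 7e−3, 6^{2e})) = 5 (virtual dimension 2), and ℓ(L(7e+3, 7e−2, 6^{2e})) = 9 (virtual dimension 8); in particular all four systems are special. -/

import Mathlib

open MvPolynomial

/-- The iterated partial derivative corresponding to the multi-index `ν`. -/
noncomputable def mderiv (ν : Fin 3 → ℕ) :
    MvPolynomial (Fin 3) ℂ →ₗ[ℂ] MvPolynomial (Fin 3) ℂ :=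
  ((pderiv (R := ℂ) (0 : Fin 3)).toLinearMap ^ ν 0) ∘ₗ
  ((pderiv (R := ℂ) (1 : Fin 3)).toLinearMap ^ ν 1) ∘ₗ
  ((pderiv (R := ℂ) (2 : Fin 3)).toLinearMap ^ ν 2)

/-- The linear system `L(d; m)` of homogeneous forms of degree `d` in three variables
all of whose partial derivatives of order `< m i` vanish at the point `p i`,
i.e. plane curves of degree `d` with multiplicity at least `m i` at `p i`. -/
noncomputable def linSys {k : ℕ} (p : Fin k → Fin 3 → ℂ) (d : ℕ) (m : Fin k → ℕ) :
    Submodule ℂ (MvPolynomial (Fin 3) ℂ) :=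
  (homogeneousSubmodule (Fin 3) ℂ d) ⊓
    ⨅ (i : Fin k), ⨅ (ν : Fin 3 → ℕ), ⨅ (_ : ν 0 + ν 1 + ν 2 < m i),
      LinearMap.ker ((aeval (p i)).toLinearMap ∘ₗ mderiv ν)

/-- The projective dimension `ℓ` of the linear system (`-1` means empty). -/
noncomputable def projDim {k : ℕ} (p : Fin k → Fin 3 → ℂ) (d : ℕ) (m : Fin k → ℕ) : ℤ :=
  (Module.finrank ℂ (linSys p d m) : ℤ) - 1

/-- The virtual dimension `v = d(d+3)/2 - ∑ mᵢ(mᵢ+1)/2`. -/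
def virtDim {k : ℕ} (d : ℕ) (m : Fin k → ℕ) : ℤ :=
  ((d : ℤ) * (d + 3)) / 2 - ∑ i : Fin k, ((m i : ℤ) * (m i + 1)) / 2

/-- The quasi-homogeneous multiplicity vector `(m₀, 6, …, 6)` on `n + 1` points. -/
def qh (n m0 : ℕ) : Fin (n + 1) → ℕ := fun i => if i = 0 then m0 else 6

/-- A property `Q` of configurations of `k` points of `ℙ²` (given by nonzero homogeneous
coordinate vectors) holds for points in general position: there is a nonzero polynomial
in the coordinates such that `Q` holds whenever it does not vanish. -/
def Generically (k : ℕ) (Q : (Fin k → Fin 3 → ℂ) → Prop) : Prop :=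
  ∃ P : MvPolynomial (Fin k × Fin 3) ℂ, P ≠ 0 ∧
    ∀ p : Fin k → Fin 3 → ℂ, (∀ i, p i ≠ 0) →
      eval (fun x => p x.1 x.2) P ≠ 0 → Q p

/-- `F` vanishes to order at least `n` at `p`, by recursion on the order. -/
def VanishesToOrder (p : Fin 3 → ℂ) : ℕ → MvPolynomial (Fin 3) ℂ → Prop
  | 0, _ => True
  | n + 1, F => aeval p F = 0 ∧ ∀ i, VanishesToOrder p n (pderiv i F)

lemma pderiv_comm_apply (i j : Fin 3) (F : MvPolynomial (Fin 3) ℂ) :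
    pderiv i (pderiv j F) = pderiv j (pderiv i F) := by
  ext μ
  simp only [coeff_pderiv, Finsupp.add_apply]
  rcases eq_or_ne i j with rfl | h
  · rfl
  · rw [Finsupp.single_eq_of_ne h.symm, Finsupp.single_eq_of_ne h, add_right_comm μ]
    push_cast
    ring

lemma mderiv_zero (F : MvPolynomial (Fin 3) ℂ) : mderiv 0 F = F := by
  simp [mderiv]

lemma pderiv_commute (i j : Fin 3) :
    Commute (pderiv (R := ℂ) i).toLinearMap (pderiv (R := ℂ) j).toLinearMap :=
  LinearMap.ext fun F => pderiv_comm_apply i j F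

lemma mderiv_pderiv (ν : Fin 3 → ℕ) (i : Fin 3) (F : MvPolynomial (Fin 3) ℂ) :
    mderiv ν (pderiv i F) = mderiv (ν + Pi.single i 1) F := by
  suffices h : mderiv ν * (pderiv (R := ℂ) i).toLinearMap = mderiv (ν + Pi.single i 1) from
    LinearMap.congr_fun h F
  have h01 := ((pderiv_commute 0 1).pow_left (ν 1)).symm
  have c (i j : Fin 3) (k : ℕ) := (pderiv_commute i j).pow_left k
  simp only [mderiv, ← Module.End.mul_eq_comp]
  fin_cases i
  · simp only [Fin.zero_eta, mul_assoc, Pi.add_apply, Pi.single_eq_same, pow_succ, ne_eq,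
      one_ne_zero, not_false_eq_true, Pi.single_eq_of_ne, add_zero, Fin.reduceEq]
    rw [(c 2 0 _).eq, ← mul_assoc (_ ^ ν 1), (c 1 0 _).eq, mul_assoc]
  · simp only [Fin.mk_one, mul_assoc, Pi.add_apply, Pi.single_eq_same, pow_succ, ne_eq,
      zero_ne_one, not_false_eq_true, Pi.single_eq_of_ne, add_zero, Fin.reduceEq]
    rw [(c 2 1 _).eq]
  · simp [pow_succ, mul_assoc]

lemma exists_eq_add_single {ν : Fin 3 → ℕ} {i : Fin 3} (h : ν i ≠ 0) :
    ∃ μ : Fin 3 → ℕ, ν = μ + Pi.single i 1 ∧ ν 0 + ν 1 + ν 2 = μ 0 + μ 1 + μ 2 + 1 := by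
  refine ⟨ν - Pi.single i 1, ?_, ?_⟩
  · ext j
    rcases eq_or_ne j i with rfl | hj
    · simp; omega
    · simp [hj]
  · fin_cases i <;> simp at h ⊢ <;> omega

lemma sum_add_single (ν : Fin 3 → ℕ) (i : Fin 3) :
    (ν + Pi.single i 1 : Fin 3 → ℕ) 0 + (ν + Pi.single i 1 : Fin 3 → ℕ) 1 +
      (ν + Pi.single i 1 : Fin 3 → ℕ) 2 =
      ν 0 + ν 1 + ν 2 + 1 := by
  fin_cases i <;> simp <;> omega

lemma vanishesToOrder_iff {p : Fin 3 → ℂ} {n : ℕ} {F : MvPolynomial (Fin 3) ℂ} :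
    VanishesToOrder p n F ↔ ∀ ν : Fin 3 → ℕ, ν 0 + ν 1 + ν 2 < n → aeval p (mderiv ν F) = 0 := by
  induction n generalizing F with
  | zero => simp [VanishesToOrder]
  | succ n ih =>
    simp only [VanishesToOrder, ih, mderiv_pderiv]
    constructor
    · rintro ⟨h0, h⟩ ν hν
      by_cases hz : ν = 0
      · rwa [hz, mderiv_zero]
      · obtain ⟨i, hi⟩ := Function.ne_iff.1 hz
        obtain ⟨μ, rfl, hμ⟩ := exists_eq_add_single hi
        exact h i μ (by omega)
    · intro h
      refine ⟨by simpa [mderiv_zero] using h 0 (by simp), fun i ν hν => h _ ?_⟩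
      rw [sum_add_single]
      omega

namespace VanishesToOrder

variable {p : Fin 3 → ℂ} {m n : ℕ} {F G : MvPolynomial (Fin 3) ℂ}

lemma add (hF : VanishesToOrder p n F) (hG : VanishesToOrder p n G) :
    VanishesToOrder p n (F + G) :=
  vanishesToOrder_iff.2 fun ν hν => by
    rw [map_add, map_add, vanishesToOrder_iff.1 hF ν hν, vanishesToOrder_iff.1 hG ν hν, add_zero]

lemma pderiv (i : Fin 3) (hF : VanishesToOrder p n F) :
    VanishesToOrder p (n - 1) (MvPolynomial.pderiv i F) := by
  cases n with
  | zero => trivial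
  | succ n => exact hF.2 i

lemma aeval_eq_zero (hn : n ≠ 0) (hF : VanishesToOrder p n F) : aeval p F = 0 := by
  obtain ⟨n, rfl⟩ := Nat.exists_eq_succ_of_ne_zero hn
  exact hF.1

lemma mul (hF : VanishesToOrder p m F) (hG : VanishesToOrder p n G) :
    VanishesToOrder p (m + n) (F * G) := by
  suffices h : ∀ t, t ≤ m + n → VanishesToOrder p t (F * G) from h _ le_rfl
  intro t
  induction t generalizing m n F G with
  | zero => intro _; trivial
  | succ t ih =>
    intro ht
    refine ⟨?_, fun i => ?_⟩
    · rw [map_mul]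
      rcases Nat.eq_zero_or_pos m with rfl | hm
      · rw [hG.aeval_eq_zero (by omega), mul_zero]
      · rw [hF.aeval_eq_zero hm.ne', zero_mul]
    · rw [pderiv_mul]
      exact (ih (hF.pderiv i) hG (by omega)).add (ih hF (hG.pderiv i) (by omega))

end VanishesToOrder

lemma mem_linSys {k : ℕ} {p : Fin k → Fin 3 → ℂ} {d : ℕ} {m : Fin k → ℕ}
    {F : MvPolynomial (Fin 3) ℂ} :
    F ∈ linSys p d m ↔ F.IsHomogeneous d ∧ ∀ i, VanishesToOrder (p i) (m i) F := by
  simp [linSys, vanishesToOrder_iff, Submodule.mem_iInf]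

lemma mul_mem_linSys {k : ℕ} {p : Fin k → Fin 3 → ℂ} {d d' : ℕ} {m m' : Fin k → ℕ}
    {F G : MvPolynomial (Fin 3) ℂ} (hF : F ∈ linSys p d m) (hG : G ∈ linSys p d' m') :
    F * G ∈ linSys p (d + d') (m + m') := by
  rw [mem_linSys] at *
  exact ⟨hF.1.mul hG.1, fun i => (hF.2 i).mul (hG.2 i)⟩

lemma pow_mem_linSys {k : ℕ} {p : Fin k → Fin 3 → ℂ} {d : ℕ} {m : Fin k → ℕ}
    {F : MvPolynomial (Fin 3) ℂ} (hF : F ∈ linSys p d m) (n : ℕ) :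
    F ^ n ∈ linSys p (n * d) (n • m) := by
  induction n with
  | zero => simpa [mem_linSys, VanishesToOrder] using isHomogeneous_one (Fin 3) ℂ
  | succ n ih =>
    rw [pow_succ, succ_nsmul, Nat.succ_mul]
    exact mul_mem_linSys ih hF

lemma isHomogeneous_mderiv {F : MvPolynomial (Fin 3) ℂ} {d : ℕ} (hF : F.IsHomogeneous d)
    (ν : Fin 3 → ℕ) : ∃ n, (mderiv ν F).IsHomogeneous n := by
  have key (i : Fin 3) (a : ℕ) : ∀ {G : MvPolynomial (Fin 3) ℂ} {n : ℕ}, G.IsHomogeneous n →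
      ∃ n', (((pderiv (R := ℂ) i).toLinearMap ^ a) G).IsHomogeneous n' := by
    induction a with
    | zero => intro G n hG; exact ⟨n, by simpa using hG⟩
    | succ a ih =>
      intro G n hG
      rw [pow_succ]
      exact ih hG.pderiv
  obtain ⟨_, h2⟩ := key 2 (ν 2) hF
  obtain ⟨_, h1⟩ := key 1 (ν 1) h2
  exact key 0 (ν 0) h1

/-- By the Euler identity, the derivatives of a form in the directions other than `j` detect
vanishing at a point with nonzero `j`-th coordinate. -/
lemma IsHomogeneous.vanishesToOrder_of_apply_ne_zero {F : MvPolynomial (Fin 3) ℂ} {d m : ℕ}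
    (hF : F.IsHomogeneous d) {p : Fin 3 → ℂ} {j : Fin 3} (hj : p j ≠ 0)
    (h : ∀ ν : Fin 3 → ℕ, ν j = 0 → ν 0 + ν 1 + ν 2 < m → aeval p (mderiv ν F) = 0) :
    VanishesToOrder p m F := by
  rw [vanishesToOrder_iff]
  suffices key : ∀ N, ∀ ν : Fin 3 → ℕ, ν j = N → ν 0 + ν 1 + ν 2 < m →
      aeval p (mderiv ν F) = 0 from fun ν => key _ ν rfl
  intro N
  induction N with
  | zero => exact h
  | succ N ih =>
    intro ν hν hm
    obtain ⟨μ, rfl, hμ⟩ := exists_eq_add_single (ν := ν) (i := j) (by omega)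
    simp only [Pi.add_apply, Pi.single_eq_same, Nat.add_right_cancel_iff] at hν
    obtain ⟨n, hn⟩ := isHomogeneous_mderiv hF μ
    have euler := congrArg (aeval p) hn.sum_X_mul_pderiv
    have hcomm (i : Fin 3) : pderiv i (mderiv μ F) = mderiv (μ + Pi.single i 1) F := by
      rw [← mderiv_pderiv]
      have c (i j : Fin 3) (k : ℕ) := (pderiv_commute i j).pow_right k
      exact LinearMap.congr_fun
        ((c i 0 (μ 0)).mul_right ((c i 1 (μ 1)).mul_right (c i 2 (μ 2)))).eq F
    rw [map_sum, map_nsmul, ih μ hν (by omega), smul_zero, Finset.sum_eq_single j] at euler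
    · simpa [hj, hcomm] using euler
    · intro i _ hij
      rw [map_mul, hcomm, ih _ _ _, mul_zero]
      · simp [hij.symm, hν]
      · rw [sum_add_single]; omega
    · simp

/-- The exponents `(u, v)` with `u + v < m`. -/
abbrev TriangleIndex (m : ℕ) : Type := Σ u : Fin m, Fin (m - u)

lemma two_mul_card_triangleIndex (m : ℕ) : 2 * Fintype.card (TriangleIndex m) = m * (m + 1) := by
  rw [Fintype.card_sigma]
  simp only [Fintype.card_fin]
  rw [Fin.sum_univ_eq_sum_range (fun u => m - u)]
  induction m with
  | zero => rfl
  | succ m ih =>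
    rw [Finset.sum_range_succ']
    simp only [Nat.add_sub_add_right, mul_add, ih]
    ring_nf
    omega

instance finite_homogeneousSubmodule (d : ℕ) :
    Module.Finite ℂ (homogeneousSubmodule (Fin 3) ℂ d) :=
  Module.Finite.iff_fg.2 (homogeneousSubmodule_fg _ _ d)

instance finite_linSys {k : ℕ} (p : Fin k → Fin 3 → ℂ) (d : ℕ) (m : Fin k → ℕ) :
    Module.Finite ℂ (linSys p d m) :=
  Submodule.finiteDimensional_of_le inf_le_left

lemma le_finrank_homogeneousSubmodule (d : ℕ) :
    Fintype.card (TriangleIndex (d + 1)) ≤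
      Module.finrank ℂ (homogeneousSubmodule (Fin 3) ℂ d) := by
  let μ : TriangleIndex (d + 1) → Fin 3 →₀ ℕ := fun t =>
    Finsupp.equivFunOnFinite.symm ![t.1, t.2, d - t.1 - t.2]
  have hμ : Function.Injective μ := by
    rintro ⟨⟨u, hu⟩, v, hv⟩ ⟨⟨u', hu'⟩, v', hv'⟩ h
    have h0 : u = u' := DFunLike.congr_fun h 0
    have h1 : v = v' := DFunLike.congr_fun h 1
    subst h0 h1
    rfl
  let w : TriangleIndex (d + 1) → homogeneousSubmodule (Fin 3) ℂ d := fun t =>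
    ⟨monomial (μ t) 1, isHomogeneous_monomial _ (by
      have h1 := t.1.2
      have h2 := t.2.2
      simp [μ, Finsupp.degree_eq_sum, Fin.sum_univ_three]
      omega)⟩
  have hw : LinearIndependent ℂ w := by
    refine LinearIndependent.of_comp (homogeneousSubmodule (Fin 3) ℂ d).subtype ?_
    simpa [Function.comp_def, w] using (basisMonomials (Fin 3) ℂ).linearIndependent.comp μ hμ
  exact hw.fintype_card_le_finrank

/-- The dimension of a linear system is at least the virtual one. -/
lemma card_triangleIndex_le_finrank_linSys {k : ℕ} {p : Fin k → Fin 3 → ℂ} (hp : ∀ i, p i ≠ 0)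
    (d : ℕ) (m : Fin k → ℕ) :
    Fintype.card (TriangleIndex (d + 1)) ≤
      Module.finrank ℂ (linSys p d m) + ∑ i, Fintype.card (TriangleIndex (m i)) := by
  choose j hj using fun i => Function.ne_iff.1 (hp i)
  let ν (i : Fin k) (t : TriangleIndex (m i)) : Fin 3 → ℕ := fun l =>
    if l = j i then 0 else if l = j i + 1 then t.1 else t.2
  let V := homogeneousSubmodule (Fin 3) ℂ d
  let Φ : V →ₗ[ℂ] ((Σ i, TriangleIndex (m i)) → ℂ) := LinearMap.pi fun t =>
    (aeval (p t.1)).toLinearMap ∘ₗ mderiv (ν t.1 t.2) ∘ₗ V.subtype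
  have hker : Module.finrank ℂ (LinearMap.ker Φ) ≤ Module.finrank ℂ (linSys p d m) := by
    rw [← Submodule.finrank_map_subtype_eq]
    refine Submodule.finrank_mono ?_
    rintro _ ⟨⟨F, hF⟩, hΦ, rfl⟩
    refine mem_linSys.2 ⟨hF, fun i => IsHomogeneous.vanishesToOrder_of_apply_ne_zero hF (hj i) ?_⟩
    intro μ hμ hm
    have hsum : μ (j i + 1) + μ (j i + 2) < m i := by
      generalize j i = l at *
      fin_cases l <;> simp at hμ ⊢ <;> omega
    let t : Σ i, TriangleIndex (m i) :=
      ⟨i, ⟨μ (j i + 1), by omega⟩, ⟨μ (j i + 2), by simp only; omega⟩⟩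
    have hν : ν i t.2 = μ := by
      ext l
      have aux (a : Fin 3) (ha : μ a = 0) :
          (if l = a then 0 else if l = a + 1 then μ (a + 1) else μ (a + 2)) = μ l := by
        fin_cases a <;> fin_cases l <;> simp_all
      exact aux _ hμ
    exact hν ▸ congrFun hΦ t
  have h1 := Φ.finrank_range_add_finrank_ker
  have h2 := Submodule.finrank_le (LinearMap.range Φ)
  have h3 : _ ≤ Module.finrank ℂ V := le_finrank_homogeneousSubmodule d
  rw [Module.finrank_fintype_fun_eq_card, Fintype.card_sigma] at h2
  omega

/-- The multiplicity vector `(a, b, …, b)` on `n + 1` points. -/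
def quasiHom (n a b : ℕ) : Fin (n + 1) → ℕ := fun i => if i = 0 then a else b

lemma le_finrank_linSys_quasiHom {n : ℕ} {p : Fin (n + 1) → Fin 3 → ℂ} (hp : ∀ i, p i ≠ 0)
    (d a b : ℕ) :
    (d + 1) * (d + 2) ≤
      2 * Module.finrank ℂ (linSys p d (quasiHom n a b)) + (a * (a + 1) + n * (b * (b + 1))) := by
  have h := Nat.mul_le_mul_left 2 (card_triangleIndex_le_finrank_linSys hp d (quasiHom n a b))
  rw [two_mul_card_triangleIndex, mul_add 2, Finset.mul_sum] at h
  simp only [two_mul_card_triangleIndex, Fin.sum_univ_succ] at h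
  simpa [quasiHom] using h

lemma exists_ne_zero_mem_linSys_quasiHom {n : ℕ} {p : Fin (n + 1) → Fin 3 → ℂ}
    (hp : ∀ i, p i ≠ 0) {d a b : ℕ} (h : a * (a + 1) + n * (b * (b + 1)) < (d + 1) * (d + 2)) :
    ∃ F ∈ linSys p d (quasiHom n a b), F ≠ 0 := by
  refine Submodule.exists_mem_ne_zero_of_ne_bot fun hbot => ?_
  have := le_finrank_linSys_quasiHom hp d a b
  rw [hbot, finrank_bot] at this
  omega

/-- Multiplication by the lines through `p 0` and by the remaining copies of the `(-1)`-curve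
embeds a system with large virtual dimension into the given one. -/
lemma le_finrank_linSys_qh {n f r : ℕ} (hn : n = 2 * (f + 1)) (hr : r ≤ 5)
    {p : Fin (n + 1) → Fin 3 → ℂ} (hp : ∀ i, p i ≠ 0) :
    (r + 1) * (r + 2) ≤
      2 * Module.finrank ℂ (linSys p (7 * (f + 1) + r) (qh n (7 * f + 2 + r))) := by
  obtain ⟨g, hg, hg0⟩ := exists_ne_zero_mem_linSys_quasiHom hp (d := n) (a := n) (b := 1)
    (by subst hn; ring_nf; omega)
  obtain ⟨c, hc, hc0⟩ := exists_ne_zero_mem_linSys_quasiHom hp (d := f + 1) (a := f) (b := 1)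
    (by subst hn; ring_nf; omega)
  have hgc := mul_mem_linSys hg (pow_mem_linSys hc (5 - r))
  have hmem : ∀ w ∈ linSys p (r * (f + 2)) (quasiHom n (r * (f + 1)) r),
      g * c ^ (5 - r) * w ∈ linSys p (7 * (f + 1) + r) (qh n (7 * f + 2 + r)) := by
    intro w hw
    have hd : n + (5 - r) * (f + 1) + r * (f + 2) = 7 * (f + 1) + r := by
      interval_cases r <;> omega
    have hm : quasiHom n n 1 + (5 - r) • quasiHom n f 1 + quasiHom n (r * (f + 1)) r =
        qh n (7 * f + 2 + r) := by
      ext i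
      by_cases hi : i = 0
      · simp only [quasiHom, qh, hi, Pi.add_apply, Pi.smul_apply, if_true, smul_eq_mul]
        interval_cases r <;> omega
      · simp only [quasiHom, qh, hi, Pi.add_apply, Pi.smul_apply, if_false, smul_eq_mul]
        omega
    rw [← hd, ← hm]
    exact mul_mem_linSys hgc hw
  have hinj : Function.Injective ((LinearMap.mulLeft ℂ (g * c ^ (5 - r))).restrict hmem) :=
    fun _ _ h => Subtype.ext <| mul_left_cancel₀ (mul_ne_zero hg0 (pow_ne_zero _ hc0))
      (congrArg Subtype.val h)
  have h1 := LinearMap.finrank_le_finrank_of_injective hinj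
  have h2 := le_finrank_linSys_quasiHom hp (r * (f + 2)) (r * (f + 1)) r
  have h3 : (r * (f + 2) + 1) * (r * (f + 2) + 2) = (r + 1) * (r + 2) +
      (r * (f + 1) * (r * (f + 1) + 1) + n * (r * (r + 1))) := by rw [hn]; ring
  omega

/-- Upper semicontinuity of the dimension of the solution space of a linear system whose
coefficients are polynomials in the parameter `x`. -/
lemma exists_eval_ne_zero_finrank_le {σ ι V : Type*} [Fintype ι] [AddCommGroup V] [Module ℂ V]
    [Module.Finite ℂ V] (Φ : ι → V →ₗ[ℂ] MvPolynomial σ ℂ) (K : (σ → ℂ) → Submodule ℂ V)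
    (hK : ∀ x v, v ∈ K x ↔ ∀ i, eval x (Φ i v) = 0) (x₀ : σ → ℂ) :
    ∃ P : MvPolynomial σ ℂ, eval x₀ P ≠ 0 ∧
      ∀ x, eval x P ≠ 0 → Module.finrank ℂ (K x) ≤ Module.finrank ℂ (K x₀) := by
  classical
  obtain ⟨S, hS⟩ := Submodule.exists_isCompl (K x₀)
  let Ψ (x : σ → ℂ) : S →ₗ[ℂ] ι → ℂ :=
    LinearMap.pi fun i => (aeval x).toLinearMap ∘ₗ Φ i ∘ₗ S.subtype
  have hΨ (x : σ → ℂ) (v : S) (hv : (v : V) ∈ K x) : Ψ x v = 0 :=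
    funext fun i => by simpa [Ψ, coe_aeval_eq_eval] using (hK x v).1 hv i
  have hker : LinearMap.ker (Ψ x₀) = ⊥ := by
    refine LinearMap.ker_eq_bot'.2 fun v hv => Subtype.ext ?_
    refine (Submodule.disjoint_def.1 hS.disjoint) v ((hK _ _).2 fun i => ?_) v.2
    simpa [Ψ, coe_aeval_eq_eval] using congrFun hv i
  obtain ⟨L, hL⟩ := (Ψ x₀).exists_leftInverse_of_injective hker
  let b := Module.finBasis ℂ S
  let M : Matrix _ _ (MvPolynomial σ ℂ) :=
    Matrix.of fun a c => ∑ i, C (b.repr (L (Pi.single i 1)) a) * Φ i (b c)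
  have hM (x : σ → ℂ) : eval x M.det = LinearMap.det (L ∘ₗ Ψ x) := by
    rw [RingHom.map_det, ← LinearMap.det_toMatrix b]
    congr 1
    ext a c
    rw [LinearMap.toMatrix_apply, LinearMap.comp_apply, pi_eq_sum_univ' (Ψ x (b c))]
    simp [M, Ψ, mul_comm]
  refine ⟨M.det, by simp [hM, hL], fun x hx => ?_⟩
  rw [hM] at hx
  have hdisj : Disjoint (K x) S := by
    refine Submodule.disjoint_def.2 fun v hv hvS => ?_
    have hbot := LinearMap.isUnit_iff_ker_eq_bot _ |>.1
      ((LinearMap.isUnit_iff_isUnit_det _).2 hx.isUnit)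
    have h0 : (L ∘ₗ Ψ x) ⟨v, hvS⟩ = 0 := by simp [hΨ x ⟨v, hvS⟩ hv]
    exact congrArg Subtype.val (LinearMap.ker_eq_bot'.1 hbot _ h0)
  have h1 := Submodule.finrank_add_finrank_le_of_disjoint hdisj
  have h2 := Submodule.finrank_add_eq_of_isCompl hS
  omega

lemma exists_eval_ne_zero_finrank_linSys_le {k : ℕ} (d : ℕ) (m : Fin k → ℕ)
    (p₀ : Fin k → Fin 3 → ℂ) :
    ∃ P : MvPolynomial (Fin k × Fin 3) ℂ, eval (fun x => p₀ x.1 x.2) P ≠ 0 ∧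
      ∀ p : Fin k → Fin 3 → ℂ, eval (fun x => p x.1 x.2) P ≠ 0 →
        Module.finrank ℂ (linSys p d m) ≤ Module.finrank ℂ (linSys p₀ d m) := by
  let V := homogeneousSubmodule (Fin 3) ℂ d
  let Φ (t : Σ i, {ν : Fin 3 → Fin (m i) // (ν 0 + ν 1 + ν 2 : ℕ) < m i}) :
      V →ₗ[ℂ] MvPolynomial (Fin k × Fin 3) ℂ :=
    (rename fun j => (t.1, j)).toLinearMap ∘ₗ mderiv (fun l => t.2.1 l) ∘ₗ V.subtype
  obtain ⟨P, hP₀, hP⟩ := exists_eval_ne_zero_finrank_le Φ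
    (fun x => (linSys (fun i j => x (i, j)) d m).comap V.subtype) (fun x v => by
      have hx (i : Fin k) (F : MvPolynomial (Fin 3) ℂ) :
          eval x (rename (fun j => (i, j)) F) = aeval (fun j => x (i, j)) F := by
        rw [eval_rename, aeval_eq_eval]
        rfl
      simp only [Submodule.mem_comap, mem_linSys, vanishesToOrder_iff, V, Φ, LinearMap.comp_apply,
        Submodule.subtype_apply, AlgHom.toLinearMap_apply, hx]
      refine ⟨fun h t => h.2 t.1 _ t.2.2, fun h => ⟨v.2, fun i ν hν => ?_⟩⟩
      exact h ⟨i, fun l => ⟨ν l, by fin_cases l <;> simp <;> omega⟩, hν⟩) (fun x => p₀ x.1 x.2)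
  have heq (p : Fin k → Fin 3 → ℂ) : Module.finrank ℂ ((linSys p d m).comap V.subtype) =
      Module.finrank ℂ (linSys p d m) :=
    (Submodule.comapSubtypeEquivOfLe inf_le_left).finrank_eq
  exact ⟨P, hP₀, fun p hp => by simpa only [heq] using hP _ hp⟩

namespace Polynomial

/-- Polynomials in `Y` over `ℂ[X]`, of degree less than `K` in `Y` and of total degree at most
`(K + 1) * e + r`, vanishing to order `K` at the points `(s i, s i ^ e)` of the curve `Y = X ^ e`;
the last condition is expressed through the expansion in powers of `Y - X ^ e`. -/
noncomputable def curveSystem {ι : Type*} (s : ι → ℂ) (e r K : ℕ) : Submodule ℂ ℂ[X][X] where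
  carrier := {f | (∀ n j, (K + 1) * e + r < n + j → (f.coeff j).coeff n = 0) ∧
    (∀ j, K ≤ j → f.coeff j = 0) ∧
    ∀ i j, (X - C (s i)) ^ (K - j) ∣ (taylor (X ^ e) f).coeff j}
  zero_mem' := by simp
  add_mem' := by
    rintro f g ⟨hf1, hf2, hf3⟩ ⟨hg1, hg2, hg3⟩
    refine ⟨fun n j h => ?_, fun j h => ?_, fun i j => ?_⟩
    · simp [hf1 n j h, hg1 n j h]
    · simp [hf2 j h, hg2 j h]
    · rw [map_add, coeff_add]
      exact dvd_add (hf3 i j) (hg3 i j)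
  smul_mem' := by
    rintro c f ⟨hf1, hf2, hf3⟩
    refine ⟨fun n j h => ?_, fun j h => ?_, fun i j => ?_⟩
    · simp [hf1 n j h]
    · simp [hf2 j h]
    · have : c • f = (C c : ℂ[X]) • f := by ext; simp
      rw [this, map_smul, coeff_smul, smul_eq_mul]
      exact (hf3 i j).mul_left _

variable {ι : Type*} {s : ι → ℂ} {e r K : ℕ} {f : ℂ[X][X]}

lemma curveSystem_zero : curveSystem s e r 0 = ⊥ :=
  eq_bot_iff.2 fun _ hf => ext fun j => hf.2.1 j (Nat.zero_le j)

lemma mem_curveSystem_of_mul_mem (he : 1 ≤ e)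
    (hf : (X - C (X ^ e)) * f ∈ curveSystem s e r (K + 1)) : f ∈ curveSystem s e r K := by
  obtain ⟨h1, h2, h3⟩ := hf
  refine ⟨fun n j => ?_, fun j hj => ?_, fun i j => ?_⟩
  · induction j generalizing n with
    | zero =>
      intro h
      have := h1 (n + e) 0 (by nlinarith)
      simpa only [sub_mul, coeff_sub, mul_coeff_zero, coeff_X_zero, zero_mul, coeff_C_zero,
        coeff_X_pow_mul, zero_sub, neg_eq_zero, coeff_neg] using this
    | succ j ih =>
      intro h
      have h4 := h1 (n + e) (j + 1) (by nlinarith)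
      have h5 := ih (n + e) (by omega)
      simpa only [sub_mul, coeff_sub, coeff_X_mul, coeff_C_mul, coeff_X_pow_mul, h5, zero_sub,
        neg_eq_zero] using h4
  · by_contra hne
    have hf0 : f ≠ 0 := by rintro rfl; simp at hne
    have hd := natDegree_mul (X_sub_C_ne_zero ((X : ℂ[X]) ^ e)) hf0
    rw [natDegree_X_sub_C] at hd
    have hlt := h2 _ (show K + 1 ≤ 1 + f.natDegree by have := le_natDegree_of_ne_zero hne; omega)
    rw [← hd, coeff_natDegree, leadingCoeff_eq_zero] at hlt
    exact mul_ne_zero (X_sub_C_ne_zero _) hf0 hlt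
  · have := h3 i (j + 1)
    rwa [taylor_mul, map_sub, taylor_X, taylor_C, add_sub_cancel_right, coeff_X_mul,
      Nat.add_sub_add_right] at this

lemma natDegree_eval_le_of_mem_curveSystem (he : 1 ≤ e) (hf : f ∈ curveSystem s e r (K + 1)) :
    (f.eval (X ^ e)).natDegree + K ≤ 2 * e * (K + 1) + r := by
  obtain ⟨h1, h2, -⟩ := hf
  obtain ⟨e, rfl⟩ := Nat.exists_eq_add_of_le' he
  suffices h : (f.eval (X ^ (e + 1))).natDegree ≤ (K + 1 + 1) * (e + 1) + r + e * K by
    refine (Nat.add_le_add_right h K).trans_eq ?_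
    ring
  rw [eval_eq_sum_range' (n := K + 1)]
  · refine natDegree_sum_le_of_forall_le _ _ fun j hj => ?_
    rw [Finset.mem_range] at hj
    refine natDegree_le_iff_coeff_eq_zero.2 fun n hn => ?_
    rw [← pow_mul, coeff_mul_X_pow']
    split_ifs with h
    · refine h1 _ _ ?_
      have : e * j ≤ e * K := Nat.mul_le_mul_left e (by omega)
      have : (e + 1) * j = e * j + j := by ring
      omega
    · rfl
  · exact Nat.lt_succ_of_le (natDegree_le_iff_coeff_eq_zero.2 fun j hj => h2 j hj)

lemma rank_curveSystem_succ_le [Fintype ι] (hs : Function.Injective s) (he : 1 ≤ e)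
    (hι : Fintype.card ι = 2 * e) :
    Module.rank ℂ (curveSystem s e r (K + 1)) ≤
      (r + 1 - K : ℕ) + Module.rank ℂ (curveSystem s e r K) := by
  let φ : ℂ[X][X] →ₗ[ℂ] ℂ[X] := (leval (X ^ e)).restrictScalars ℂ
  let P : ℂ[X] := ∏ i, (X - C (s i)) ^ (K + 1)
  have hP : P.Monic := monic_prod_of_monic _ _ fun i _ => (monic_X_sub_C _).pow _
  have hPdeg : P.natDegree = 2 * e * (K + 1) := by
    rw [natDegree_prod_of_monic _ _ fun i _ => (monic_X_sub_C _).pow _]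
    simp [hι]
  have hrange : LinearMap.range (φ.domRestrict (curveSystem s e r (K + 1))) ≤
      (degreeLT ℂ (r + 1 - K)).map (LinearMap.mulLeft ℂ P) := by
    rintro _ ⟨⟨f, hf⟩, rfl⟩
    have hdvd : P ∣ f.eval (X ^ e) := by
      refine Finset.prod_dvd_of_coprime (fun i _ j _ hij => ?_) fun i _ => ?_
      · exact (pairwise_coprime_X_sub_C hs hij).pow
      · simpa [taylor_coeff_zero] using hf.2.2 i 0
    obtain ⟨q, hq⟩ := hdvd
    refine ⟨q, ?_, hq.symm⟩
    rw [SetLike.mem_coe, mem_degreeLT]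
    by_cases hq0 : q = 0
    · simp [hq0]
    · have h := natDegree_eval_le_of_mem_curveSystem he hf
      rw [hq, hP.natDegree_mul' hq0, hPdeg] at h
      rw [degree_eq_natDegree hq0, Nat.cast_lt]
      omega
  have hker : (LinearMap.ker (φ.domRestrict (curveSystem s e r (K + 1)))).map
      (Submodule.subtype _) ≤
      (curveSystem s e r K).map (LinearMap.mulLeft ℂ (X - C (X ^ e))) := by
    rintro _ ⟨⟨f, hf⟩, hf0, rfl⟩
    obtain ⟨g, rfl⟩ := dvd_iff_isRoot.2 (show IsRoot f (X ^ e) from hf0)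
    exact ⟨g, mem_curveSystem_of_mul_mem he hf, rfl⟩
  have hrk := LinearMap.rank_range_add_rank_ker (M := curveSystem s e r (K + 1))
    (M₁ := ℂ[X]) (φ.domRestrict (curveSystem s e r (K + 1)))
  rw [← hrk]
  gcongr
  · refine (Submodule.rank_mono hrange).trans ((rank_map_le _ _).trans ?_)
    rw [(degreeLTEquiv ℂ (r + 1 - K)).rank_eq]
    simp
  · rw [← (Submodule.equivSubtypeMap _ _).rank_eq.symm]
    exact (Submodule.rank_mono hker).trans (rank_map_le _ _)

lemma rank_curveSystem_le [Fintype ι] (hs : Function.Injective s) (he : 1 ≤ e)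
    (hι : Fintype.card ι = 2 * e) :
    Module.rank ℂ (curveSystem s e r K) ≤ (∑ k ∈ Finset.range K, (r + 1 - k) : ℕ) := by
  induction K with
  | zero => simp [curveSystem_zero]
  | succ K ih =>
    rw [Finset.sum_range_succ, add_comm (∑ k ∈ _, _), Nat.cast_add]
    exact (rank_curveSystem_succ_le hs he hι).trans (by gcongr)

end Polynomial

lemma derivation_aeval {A : Type*} [CommRing A] [Algebra ℂ A] (D : Derivation ℂ A A)
    (γ : Fin 3 → A) (F : MvPolynomial (Fin 3) ℂ) :
    D (aeval γ F) = ∑ i, aeval γ (pderiv i F) * D (γ i) := by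
  induction F using MvPolynomial.induction_on with
  | C a => simp
  | add F G hF hG => simp [hF, hG, add_mul, Finset.sum_add_distrib]
  | mul_X F j hF =>
    have h (i : Fin 3) : aeval γ (pderiv i (F * X j)) * D (γ i) =
        γ j * (aeval γ (pderiv i F) * D (γ i)) +
          if i = j then aeval γ F * D (γ j) else 0 := by
      rcases eq_or_ne i j with rfl | hij
      · simp only [pderiv_mul, pderiv_X_self, map_add, map_mul, aeval_X, map_one, if_true]
        ring
      · simp only [pderiv_mul, pderiv_X_of_ne hij.symm, map_add, map_mul, aeval_X, map_zero,
          if_neg hij]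
        ring
    rw [map_mul, aeval_X, D.leibniz, hF, Finset.sum_congr rfl fun i _ => h i,
      Finset.sum_add_distrib, Finset.sum_ite_eq' Finset.univ j, ← Finset.mul_sum]
    simp [add_comm]

lemma Polynomial.X_sub_C_pow_succ_dvd {G : Polynomial ℂ} {s : ℂ} {n : ℕ} (h0 : G.eval s = 0)
    (h : (Polynomial.X - Polynomial.C s) ^ n ∣ G.derivative) :
    (Polynomial.X - Polynomial.C s) ^ (n + 1) ∣ G := by
  rcases eq_or_ne G 0 with rfl | hG
  · exact dvd_zero _
  have hroot : G.IsRoot s := h0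
  have hpos := (Polynomial.rootMultiplicity_pos hG).2 hroot
  have hG' : G.derivative ≠ 0 := fun h' => hG <| by
    rw [Polynomial.eq_C_of_derivative_eq_zero h'] at h0 ⊢
    rw [Polynomial.eval_C] at h0
    rw [h0, Polynomial.C_0]
  rw [← Polynomial.le_rootMultiplicity_iff hG', Polynomial.derivative_rootMultiplicity_of_root hroot]
    at h
  rw [← Polynomial.le_rootMultiplicity_iff hG]
  omega

lemma VanishesToOrder.X_sub_C_pow_dvd {γ : Fin 3 → Polynomial ℂ} {s : ℂ} {n : ℕ}
    {F : MvPolynomial (Fin 3) ℂ} (hF : VanishesToOrder (fun i => (γ i).eval s) n F) :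
    (Polynomial.X - Polynomial.C s) ^ n ∣ aeval γ F := by
  induction n generalizing F with
  | zero => rw [pow_zero]; exact one_dvd _
  | succ n ih =>
    refine Polynomial.X_sub_C_pow_succ_dvd ?_ ?_
    · have := comp_aeval_apply γ (Polynomial.aeval s) F
      simp only [Polynomial.coe_aeval_eq_eval] at this
      exact this.trans hF.1
    · have := derivation_aeval (Polynomial.derivative' (R := ℂ)) γ F
      rw [show (aeval γ F).derivative = _ from this]
      exact Finset.dvd_sum fun i _ => (ih (hF.2 i)).mul_right _

lemma IsHomogeneous.sum_eq_of_mem_support {F : MvPolynomial (Fin 3) ℂ} {d : ℕ}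
    (hd : F.IsHomogeneous d) {μ : Fin 3 →₀ ℕ} (hμ : μ ∈ F.support) : μ 0 + μ 1 + μ 2 = d := by
  have h := hd (mem_support_iff.1 hμ)
  simpa [Finsupp.weight_apply, Finsupp.sum_fintype, Fin.sum_univ_three] using h

lemma VanishesToOrder.iterate_pderiv {p : Fin 3 → ℂ} {n : ℕ} {F : MvPolynomial (Fin 3) ℂ}
    (hF : VanishesToOrder p n F) (i : Fin 3) (j : ℕ) :
    VanishesToOrder p (n - j) ((MvPolynomial.pderiv i)^[j] F) := by
  induction j with
  | zero => exact hF
  | succ j ih =>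
    rw [Function.iterate_succ_apply', ← Nat.sub_sub]
    exact ih.pderiv i

lemma VanishesToOrder.coeff_eq_zero {F : MvPolynomial (Fin 3) ℂ} {d n : ℕ}
    (hF : VanishesToOrder ![0, 0, 1] n F) (hd : F.IsHomogeneous d) {μ : Fin 3 →₀ ℕ}
    (hμ : μ 0 + μ 1 < n) : coeff μ F = 0 := by
  induction n generalizing F d μ with
  | zero => omega
  | succ n ih =>
    have key (i : Fin 3) (hi : i ≠ 2) (h : μ i ≠ 0) : coeff μ F = 0 := by
      have hle : Finsupp.single i 1 ≤ μ := by simpa [Nat.one_le_iff_ne_zero] using h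
      have h0 : coeff (μ - Finsupp.single i 1) (MvPolynomial.pderiv i F) = 0 := by
        refine ih (hF.2 i) (IsHomogeneous.pderiv hd) ?_
        fin_cases i <;> simp at h hi ⊢ <;> omega
      rw [coeff_pderiv, tsub_add_cancel_of_le hle] at h0
      exact (mul_eq_zero.1 h0).resolve_right (Nat.cast_add_one_ne_zero _)
    by_cases h0 : μ 0 = 0
    · by_cases h1 : μ 1 = 0
      · by_contra hne
        refine hne (Eq.trans ?_ hF.1)
        rw [aeval_def, eval₂_eq', Finset.sum_eq_single μ]
        · simp only [Fin.prod_univ_three, h0, h1]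
          simp
        · intro ν hν hne'
          have h3 := IsHomogeneous.sum_eq_of_mem_support hd hν
          have h4 := IsHomogeneous.sum_eq_of_mem_support hd (mem_support_iff.2 hne)
          by_cases h5 : ν 0 = 0 ∧ ν 1 = 0
          · refine (hne' (Finsupp.ext fun i => ?_)).elim
            fin_cases i <;> simp <;> omega
          · simp only [Fin.prod_univ_three]
            rw [not_and_or] at h5
            rcases h5 with h5 | h5 <;> simp [h5]
        · exact fun h => (h (mem_support_iff.2 hne)).elim
      · exact key 1 (by decide) h1
    · exact key 0 (by decide) h0

/-- The restriction of a form to the chart where the second coordinate is `1`. -/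
noncomputable def toChart : MvPolynomial (Fin 3) ℂ →ₐ[ℂ] Polynomial (Polynomial ℂ) :=
  aeval ![Polynomial.C Polynomial.X, 1, Polynomial.X]

lemma coeff_coeff_toChart (F : MvPolynomial (Fin 3) ℂ) (n j : ℕ) :
    ((toChart F).coeff j).coeff n =
      ∑ μ ∈ F.support, if j = μ 2 ∧ n = μ 0 then coeff μ F else 0 := by
  rw [toChart, aeval_def, eval₂_eq', Polynomial.finsetSum_coeff, Polynomial.finsetSum_coeff]
  refine Finset.sum_congr rfl fun μ _ => ?_
  have : algebraMap ℂ (Polynomial (Polynomial ℂ)) (coeff μ F) =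
    Polynomial.C (Polynomial.C (coeff μ F)) := rfl
  simp only [Fin.prod_univ_three, this]
  simp only [Matrix.cons_val_zero, Matrix.cons_val_one, Matrix.cons_val, one_pow, mul_one,
    ← Polynomial.C_pow, ← mul_assoc, ← Polynomial.C_mul, Polynomial.coeff_C_mul_X_pow]
  split_ifs <;> simp_all

lemma iterate_derivative_toChart (F : MvPolynomial (Fin 3) ℂ) (j : ℕ) :
    Polynomial.derivative^[j] (toChart F) = toChart ((pderiv 2)^[j] F) := by
  induction j generalizing F with
  | zero => rfl
  | succ j ih =>
    rw [Function.iterate_succ_apply, Function.iterate_succ_apply, ← ih]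
    congr 1
    have := derivation_aeval ((Polynomial.derivative' (R := Polynomial ℂ)).restrictScalars ℂ)
      ![Polynomial.C Polynomial.X, 1, Polynomial.X] F
    refine this.trans ?_
    simp [Fin.sum_univ_three, Polynomial.derivative', toChart]

lemma eval_toChart (F : MvPolynomial (Fin 3) ℂ) (u : Polynomial ℂ) :
    (toChart F).eval u = aeval ![Polynomial.X, 1, u] F := by
  have := comp_aeval_apply ![Polynomial.C Polynomial.X, 1, Polynomial.X]
    ((Polynomial.aeval (R := Polynomial ℂ) u).restrictScalars ℂ) F
  refine this.trans ?_
  congr 2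
  ext i : 1
  fin_cases i <;> simp

lemma factorial_mul_coeff_taylor_toChart (F : MvPolynomial (Fin 3) ℂ) (u : Polynomial ℂ) (j : ℕ) :
    (j.factorial : Polynomial ℂ) * (Polynomial.taylor u (toChart F)).coeff j =
      aeval ![Polynomial.X, 1, u] ((pderiv 2)^[j] F) := by
  rw [← eval_toChart, ← iterate_derivative_toChart, ← Polynomial.factorial_smul_hasseDeriv,
    Polynomial.taylor_coeff]
  simp

/-- A configuration of points in special position: `(0 : 0 : 1)` and `n` points of the curve
`Z = X ^ e` in the chart `Y = 1`. -/
noncomputable def specialPoints (n e : ℕ) : Fin (n + 1) → Fin 3 → ℂ :=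
  Fin.cons ![0, 0, 1] fun i => ![(i : ℂ), 1, (i : ℂ) ^ e]

lemma toChart_mem_curveSystem {n e r m : ℕ} (hm : m + 5 = 7 * e + r) {F : MvPolynomial (Fin 3) ℂ}
    (hF : F ∈ linSys (specialPoints n e) (7 * e + r) (qh n m)) :
    toChart F ∈ Polynomial.curveSystem (fun i : Fin n => (i : ℂ)) e r 6 := by
  obtain ⟨hd, hv⟩ := mem_linSys.1 hF
  refine ⟨fun a j h => ?_, fun j hj => Polynomial.ext fun a => ?_, fun i j => ?_⟩
  · rw [coeff_coeff_toChart]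
    refine Finset.sum_eq_zero fun μ hμ => if_neg ?_
    have := IsHomogeneous.sum_eq_of_mem_support hd hμ
    omega
  · rw [coeff_coeff_toChart]
    refine Finset.sum_eq_zero fun μ hμ => ite_eq_right_iff.2 fun h => ?_
    have := IsHomogeneous.sum_eq_of_mem_support hd hμ
    have hv0 : VanishesToOrder ![0, 0, 1] m F := hv 0
    exact hv0.coeff_eq_zero hd (by omega)
  · have hvi : VanishesToOrder ![(i : ℂ), 1, (i : ℂ) ^ e] 6 F := by
      simpa [specialPoints, qh] using hv i.succ
    have hu : IsUnit (j.factorial : Polynomial ℂ) := by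
      rw [← Polynomial.C_eq_natCast]
      exact Polynomial.isUnit_C.2 (Nat.cast_ne_zero.2 j.factorial_ne_zero).isUnit
    rw [← hu.dvd_mul_left, factorial_mul_coeff_taylor_toChart]
    refine VanishesToOrder.X_sub_C_pow_dvd ?_
    convert hvi.iterate_pderiv 2 j using 1
    ext l
    fin_cases l <;> simp

lemma eq_zero_of_toChart_eq_zero {d : ℕ} {F : MvPolynomial (Fin 3) ℂ} (hd : F.IsHomogeneous d)
    (h0 : toChart F = 0) : F = 0 := by
  by_contra hne
  obtain ⟨μ, hμ⟩ := support_nonempty.2 hne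
  have h := coeff_coeff_toChart F (μ 0) (μ 2)
  rw [Finset.sum_eq_single μ, h0] at h
  · exact mem_support_iff.1 hμ (by simpa using h.symm)
  · refine fun ν hν hνμ => if_neg fun h' => hνμ (Finsupp.ext fun i => ?_)
    have := IsHomogeneous.sum_eq_of_mem_support hd hμ
    have := IsHomogeneous.sum_eq_of_mem_support hd hν
    fin_cases i <;> simp <;> omega
  · exact fun h' => (h' hμ).elim

lemma finrank_linSys_specialPoints_le {e r m : ℕ} (he : 1 ≤ e) (hr : r ≤ 5)
    (hm : m + 5 = 7 * e + r) :
    2 * Module.finrank ℂ (linSys (specialPoints (2 * e) e) (7 * e + r) (qh (2 * e) m)) ≤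
      (r + 1) * (r + 2) := by
  let T := toChart.toLinearMap.restrict fun F hF => toChart_mem_curveSystem (n := 2 * e) hm hF
  have hT : Function.Injective T := by
    refine (injective_iff_map_eq_zero T).2 fun F hF => Subtype.ext ?_
    exact eq_zero_of_toChart_eq_zero (mem_linSys.1 F.2).1 (congrArg Subtype.val hF)
  have h := (LinearMap.rank_le_of_injective T hT).trans
    (Polynomial.rank_curveSystem_le
      (fun i j h => Fin.ext (Nat.cast_injective (R := ℂ) h)) he (Fintype.card_fin _))
  rw [← Module.finrank_eq_rank, Nat.cast_le] at h
  refine (Nat.mul_le_mul_left 2 h).trans ?_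
  interval_cases r <;> simp [Finset.sum_range_succ]

lemma virtDim_qh (f r : ℕ) :
    virtDim (7 * (f + 1) + r) (qh (2 * (f + 1)) (7 * f + 2 + r)) = 6 * r - 10 := by
  have hsum : ∑ i, ((qh (2 * (f + 1)) (7 * f + 2 + r) i : ℤ) *
      (qh (2 * (f + 1)) (7 * f + 2 + r) i + 1)) / 2 =
      ((7 * f + 2 + r : ℤ) * (7 * f + 2 + r + 1)) / 2 + 42 * (f + 1) := by
    rw [Fin.sum_univ_succ]
    simp [qh]
    ring
  rw [virtDim, hsum]
  have : ((7 * (f + 1) + r : ℕ) : ℤ) * ((7 * (f + 1) + r : ℕ) + 3) =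
      (7 * f + 2 + r : ℤ) * (7 * f + 2 + r + 1) + 2 * (42 * (f + 1) + (6 * r - 10)) := by
    push_cast
    ring
  rw [this]
  omega

lemma exists_eval_ne_zero_projDim_eq (f : ℕ) {r : ℕ} (hr : r ≤ 5) :
    ∃ P : MvPolynomial (Fin (2 * (f + 1) + 1) × Fin 3) ℂ,
      eval (fun x => specialPoints (2 * (f + 1)) (f + 1) x.1 x.2) P ≠ 0 ∧
      ∀ p : Fin (2 * (f + 1) + 1) → Fin 3 → ℂ, (∀ i, p i ≠ 0) →
        eval (fun x => p x.1 x.2) P ≠ 0 →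
        2 * (projDim p (7 * (f + 1) + r) (qh (2 * (f + 1)) (7 * f + 2 + r)) + 1) =
          (r + 1) * (r + 2) := by
  obtain ⟨P, hP, H⟩ := exists_eval_ne_zero_finrank_linSys_le (7 * (f + 1) + r)
    (qh (2 * (f + 1)) (7 * f + 2 + r)) (specialPoints (2 * (f + 1)) (f + 1))
  refine ⟨P, hP, fun p hp hpP => ?_⟩
  have h1 := le_finrank_linSys_qh (f := f) rfl hr hp
  have h2 := H p hpP
  have h3 := finrank_linSys_specialPoints_le (e := f + 1) (m := 7 * f + 2 + r) (by omega) hr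
    (by omega)
  rw [projDim, sub_add_cancel]
  exact_mod_cast le_antisymm ((Nat.mul_le_mul_left 2 h2).trans h3) h1

theorem special_L_7e_families (e : ℕ) (he : 1 ≤ e) :
    virtDim (7 * e) (qh (2 * e) (7 * e - 5)) = -10 ∧
    virtDim (7 * e + 1) (qh (2 * e) (7 * e - 4)) = -4 ∧
    virtDim (7 * e + 2) (qh (2 * e) (7 * e - 3)) = 2 ∧
    virtDim (7 * e + 3) (qh (2 * e) (7 * e - 2)) = 8 ∧
    Generically (2 * e + 1) (fun p =>
      (projDim p (7 * e) (qh (2 * e) (7 * e - 5)) = 0 ∧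
        projDim p (7 * e) (qh (2 * e) (7 * e - 5)) >
          max (-1) (virtDim (7 * e) (qh (2 * e) (7 * e - 5)))) ∧
      (projDim p (7 * e + 1) (qh (2 * e) (7 * e - 4)) = 2 ∧
        projDim p (7 * e + 1) (qh (2 * e) (7 * e - 4)) >
          max (-1) (virtDim (7 * e + 1) (qh (2 * e) (7 * e - 4)))) ∧
      (projDim p (7 * e + 2) (qh (2 * e) (7 * e - 3)) = 5 ∧
        projDim p (7 * e + 2) (qh (2 * e) (7 * e - 3)) >
          max (-1) (virtDim (7 * e + 2) (qh (2 * e) (7 * e - 3)))) ∧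
      (projDim p (7 * e + 3) (qh (2 * e) (7 * e - 2)) = 9 ∧
        projDim p (7 * e + 3) (qh (2 * e) (7 * e - 2)) >
          max (-1) (virtDim (7 * e + 3) (qh (2 * e) (7 * e - 2))))) := by
  obtain ⟨f, rfl⟩ := Nat.exists_eq_add_of_le' he
  have h0 : 7 * (f + 1) - 5 = 7 * f + 2 + 0 := by omega
  have h1 : 7 * (f + 1) - 4 = 7 * f + 2 + 1 := by omega
  have h2 : 7 * (f + 1) - 3 = 7 * f + 2 + 2 := by omega
  have h3 : 7 * (f + 1) - 2 = 7 * f + 2 + 3 := by omega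
  have v0 := virtDim_qh f 0
  have v1 := virtDim_qh f 1
  have v2 := virtDim_qh f 2
  have v3 := virtDim_qh f 3
  rw [add_zero] at v0
  rw [h0, h1, h2, h3, add_zero (7 * f + 2)]
  norm_num at v0 v1 v2 v3
  refine ⟨v0, v1, v2, v3, ?_⟩
  obtain ⟨P0, hP0, H0⟩ := exists_eval_ne_zero_projDim_eq f (r := 0) (by omega)
  obtain ⟨P1, hP1, H1⟩ := exists_eval_ne_zero_projDim_eq f (r := 1) (by omega)
  obtain ⟨P2, hP2, H2⟩ := exists_eval_ne_zero_projDim_eq f (r := 2) (by omega)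
  obtain ⟨P3, hP3, H3⟩ := exists_eval_ne_zero_projDim_eq f (r := 3) (by omega)
  refine ⟨P0 * P1 * P2 * P3, fun h => ?_, fun p hp hP => ?_⟩
  · have := congrArg (eval fun x => specialPoints (2 * (f + 1)) (f + 1) x.1 x.2) h
    simp only [map_mul, map_zero, mul_eq_zero] at this
    tauto
  · simp only [map_mul, mul_ne_zero_iff] at hP
    have e0 := H0 p hp hP.1.1.1
    have e1 := H1 p hp hP.1.1.2
    have e2 := H2 p hp hP.1.2
    have e3 := H3 p hp hP.2
    norm_num at e0 e1 e2 e3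
    rw [v0, v1, v2, v3]
    omega
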